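/- arXiv:1707.01151 — 2 statements merged into one kernel-verified Lean document; each statement's English description precedes it below -/
import Mathlib

section
/- Let d ≥ 1 be an integer, 0 < δ < 1, ε > 0, and let I = [a,b] ⊂ [0,1] with a < b. If p is a real polynomial of degree n ≥ d such that for every x ∈ I with |p(x)| < ε one has max_{1 ≤ j ≤ d} |p^{(j)}(x)| ≥ δ, then Leb{x ∈ I : |p(x)| < ε} ≤ C' · ε^{1/d}, where C' := (2/(b−a))^{2d−1} · (2^{d+3}/δ²) · (4 n^{2(d+1)} · max_{x∈I} |p(x)| + 1). -/
open MeasureTheory Set Filter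

noncomputable section

/-!
If `δ ≤ |f^(j)|` on an interval, then `{|f| < ε}` has measure `O((ε / δ)^(1/j))` there: where
`|f^(j-1)|` is small the interval is short, and what remains is at most two intervals on which
`|f^(j-1)|` is large. For a polynomial `p` of degree `n`, at most `2n²` points satisfy
`|p^(j)| = δ` for some `j` with `p^(j)` not constantly `±δ`. Between consecutive ones, the index
`j` provided by the hypothesis at one point works at all points, so `{|p| < ε}` has measure at
most `(2n² + 1) 2^(d+1) (ε / δ)^(1/d)`. The factor `max |p|` in the final constant comes from
Markov's inequality: `δ ≤ |p^(j)(x)|` at a single point bounds `max |p|` from below.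
-/

theorem quasilinearOn_of_deriv_ne_zero {f : ℝ → ℝ} {J : Set ℝ} (hJ : Convex ℝ J)
    (hf : ∀ x ∈ J, DifferentiableAt ℝ f x) (hf' : ∀ x ∈ J, deriv f x ≠ 0) :
    QuasilinearOn ℝ J f := by
  have hcont : ContinuousOn f J := fun x hx ↦ (hf x hx).continuousAt.continuousWithinAt
  have hdiff : DifferentiableOn ℝ f (interior J) := fun x hx ↦
    (hf x (interior_subset hx)).differentiableWithinAt
  rcases hasDerivWithinAt_forall_lt_or_forall_gt_of_forall_ne hJ
    (fun x hx ↦ (hf x hx).hasDerivAt.hasDerivWithinAt) hf' with hneg | hpos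
  · exact (antitoneOn_of_deriv_nonpos hJ hcont hdiff
      fun x hx ↦ (hneg x (interior_subset hx)).le).quasilinearOn hJ
  · exact (monotoneOn_of_deriv_nonneg hJ hcont hdiff
      fun x hx ↦ (hpos x (interior_subset hx)).le).quasilinearOn hJ

theorem mul_abs_sub_le_abs_sub_of_le_abs_deriv {f : ℝ → ℝ} {J : Set ℝ} {δ x y : ℝ}
    (hJ : Convex ℝ J) (hf : ∀ x ∈ J, DifferentiableAt ℝ f x) (hf' : ∀ x ∈ J, δ ≤ |deriv f x|)
    (hx : x ∈ J) (hy : y ∈ J) : δ * |y - x| ≤ |f y - f x| := by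
  wlog hxy : x < y generalizing x y
  · rcases (not_lt.1 hxy).eq_or_lt with rfl | hyx
    · simp
    · simpa only [abs_sub_comm] using this hy hx hyx
  have hIcc : Icc x y ⊆ J := hJ.ordConnected.out hx hy
  obtain ⟨c, hc, hslope⟩ := exists_deriv_eq_slope f hxy
    (fun z hz ↦ (hf z (hIcc hz)).continuousAt.continuousWithinAt)
    (fun z hz ↦ (hf z (hIcc (Ioo_subset_Icc_self hz))).differentiableWithinAt)
  have hδ := hf' c (hIcc (Ioo_subset_Icc_self hc))
  rwa [hslope, abs_div, le_div_iff₀ (abs_pos.2 (sub_pos.2 hxy).ne')] at hδ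

theorem volume_setOf_abs_lt_le_of_le_abs_deriv {f : ℝ → ℝ} {J : Set ℝ} {δ t : ℝ}
    (hJ : Convex ℝ J) (hδ : 0 < δ) (hf : ∀ x ∈ J, DifferentiableAt ℝ f x)
    (hf' : ∀ x ∈ J, δ ≤ |deriv f x|) :
    volume {x ∈ J | |f x| < δ * t} ≤ ENNReal.ofReal (2 * t) := by
  refine (Real.volume_le_diam _).trans (Metric.ediam_le fun x hx y hy ↦ ?_)
  rw [edist_dist, dist_comm, Real.dist_eq]
  refine ENNReal.ofReal_le_ofReal (le_of_mul_le_mul_left ?_ hδ)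
  calc δ * |y - x| ≤ |f y - f x| := mul_abs_sub_le_abs_sub_of_le_abs_deriv hJ hf hf' hx.1 hy.1
    _ ≤ |f y| + |f x| := abs_sub _ _
    _ ≤ δ * (2 * t) := by linarith [hx.2, hy.2]

theorem volume_setOf_abs_lt_mul_pow_le {j : ℕ} {f : ℝ → ℝ} {J : Set ℝ} {δ t : ℝ}
    (hf : ContDiff ℝ j f) (hJ : Convex ℝ J) (hδ : 0 < δ) (ht : 0 < t)
    (hfj : ∀ x ∈ J, δ ≤ |iteratedDeriv j f x|) :
    volume {x ∈ J | |f x| < δ * t ^ j} ≤ ENNReal.ofReal ((2 ^ (j + 1) - 2) * t) := by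
  induction j generalizing J δ with
  | zero =>
    have hempty : {x ∈ J | |f x| < δ * t ^ 0} = ∅ :=
      eq_empty_of_forall_notMem fun x hx ↦ by
        exact (hfj x hx.1).not_gt (by simpa only [pow_zero, mul_one, iteratedDeriv_zero] using hx.2)
    rw [hempty, measure_empty]
    exact zero_le
  | succ j ih =>
    set g := iteratedDeriv j f
    have hg : ∀ x ∈ J, DifferentiableAt ℝ g x := fun x _ ↦
      hf.differentiable_iteratedDeriv' j x
    have hg' : ∀ x ∈ J, δ ≤ |deriv g x| := by simpa only [iteratedDeriv_succ] using hfj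
    have hquasi : QuasilinearOn ℝ J g := quasilinearOn_of_deriv_ne_zero hJ hg fun x hx ↦
      abs_pos.1 (hδ.trans_le (hg' x hx))
    have hfC : ContDiff ℝ j f := hf.of_le (by norm_cast; omega)
    have hcover : {x ∈ J | |f x| < δ * t ^ (j + 1)} ⊆ {x ∈ J | |g x| < δ * t} ∪
        ({x ∈ {x ∈ J | δ * t ≤ g x} | |f x| < δ * t * t ^ j} ∪
          {x ∈ {x ∈ J | g x ≤ -(δ * t)} | |f x| < δ * t * t ^ j}) := by
      rintro x ⟨hxJ, hx⟩
      have hx' : |f x| < δ * t * t ^ j := by rwa [mul_assoc, ← pow_succ']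
      rcases lt_or_ge |g x| (δ * t) with hlt | hge
      · exact Or.inl ⟨hxJ, hlt⟩
      · rcases le_abs'.1 hge with hneg | hpos
        · exact Or.inr (Or.inr ⟨⟨hxJ, hneg⟩, hx'⟩)
        · exact Or.inr (Or.inl ⟨⟨hxJ, hpos⟩, hx'⟩)
    have hpos := ih hfC (hquasi.2 (δ * t)) (mul_pos hδ ht) fun x hx ↦ le_abs'.2 (Or.inr hx.2)
    have hneg := ih hfC (hquasi.1 (-(δ * t))) (mul_pos hδ ht) fun x hx ↦ le_abs'.2 (Or.inl hx.2)
    have hcoeff : (0 : ℝ) ≤ 2 ^ (j + 1) - 2 :=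
      sub_nonneg.2 (le_self_pow₀ one_le_two j.succ_ne_zero)
    calc volume {x ∈ J | |f x| < δ * t ^ (j + 1)}
        ≤ ENNReal.ofReal (2 * t) + (ENNReal.ofReal ((2 ^ (j + 1) - 2) * t) +
          ENNReal.ofReal ((2 ^ (j + 1) - 2) * t)) :=
        (measure_mono hcover).trans <| (measure_union_le _ _).trans <| add_le_add
          (volume_setOf_abs_lt_le_of_le_abs_deriv hJ hδ hg hg')
          ((measure_union_le _ _).trans (add_le_add hpos hneg))
      _ = ENNReal.ofReal ((2 ^ (j + 1 + 1) - 2) * t) := by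
        rw [← ENNReal.ofReal_add (by positivity) (by positivity),
          ← ENNReal.ofReal_add (by positivity) (by positivity)]
        ring_nf

theorem volume_setOf_abs_lt_le_rpow {j d : ℕ} {f : ℝ → ℝ} {J : Set ℝ} {δ ε : ℝ}
    (hf : ContDiff ℝ j f) (hJ : Convex ℝ J) (hj : j ≠ 0) (hjd : j ≤ d) (hε : 0 < ε) (hεδ : ε ≤ δ)
    (hfj : ∀ x ∈ J, δ ≤ |iteratedDeriv j f x|) :
    volume {x ∈ J | |f x| < ε} ≤ ENNReal.ofReal (2 ^ (d + 1) * (ε / δ) ^ (d : ℝ)⁻¹) := by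
  have hδ : 0 < δ := hε.trans_le hεδ
  have hratio : 0 < ε / δ := div_pos hε hδ
  have hpow : δ * ((ε / δ) ^ (j : ℝ)⁻¹) ^ j = ε := by
    rw [Real.rpow_inv_natCast_pow hratio.le hj, mul_div_cancel₀ _ hδ.ne']
  have hvol := volume_setOf_abs_lt_mul_pow_le hf hJ hδ (Real.rpow_pos_of_pos hratio (j : ℝ)⁻¹) hfj
  rw [hpow] at hvol
  refine hvol.trans (ENNReal.ofReal_le_ofReal ?_)
  have hcoeff : (2 : ℝ) ^ (j + 1) - 2 ≤ 2 ^ (d + 1) :=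
    (sub_le_self _ zero_le_two).trans (pow_le_pow_right₀ one_le_two (by omega))
  have hexp : (d : ℝ)⁻¹ ≤ (j : ℝ)⁻¹ :=
    inv_anti₀ (Nat.cast_pos.2 (Nat.pos_of_ne_zero hj)) (Nat.cast_le.2 hjd)
  exact mul_le_mul hcoeff
    (Real.rpow_le_rpow_of_exponent_ge hratio ((div_le_one hδ).2 hεδ) hexp)
    (Real.rpow_nonneg hratio.le _) (by positivity)

theorem measure_le_card_add_one_mul_of_ordConnected {α : Type*} [LinearOrder α]
    [MeasurableSpace α] (μ : Measure α) [NullSingletonClass μ] (F : Finset α) {S : Set α}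
    {B : ENNReal}
    (h : ∀ I : Set α, I.OrdConnected → Disjoint I F → μ (S ∩ I) ≤ B) :
    μ S ≤ (F.card + 1 : ℕ) * B := by
  induction F using Finset.induction_on_max generalizing S with
  | empty => simpa using h univ ordConnected_univ
  | insert c F hc ih =>
    have hleft : μ (S ∩ Iio c) ≤ (F.card + 1 : ℕ) * B := ih fun I hI hIF ↦ by
      rw [inter_assoc]
      refine h _ (ordConnected_Iio.inter hI) (disjoint_left.2 fun x hx hxF ↦ ?_)
      rcases Finset.mem_insert.1 (Finset.mem_coe.1 hxF) with rfl | hxF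
      · exact lt_irrefl x hx.1
      · exact disjoint_left.1 hIF hx.2 hxF
    have hright : μ (S ∩ Ioi c) ≤ B := by
      refine h _ ordConnected_Ioi (disjoint_left.2 fun x hx hxF ↦ ?_)
      rcases Finset.mem_insert.1 (Finset.mem_coe.1 hxF) with rfl | hxF
      · exact lt_irrefl x hx
      · exact lt_asymm hx (hc x hxF)
    have hcover : S ⊆ (S ∩ Iio c ∪ S ∩ Ioi c) ∪ {c} := fun x hx ↦ by
      rcases lt_trichotomy x c with hlt | heq | hgt
      exacts [Or.inl (Or.inl ⟨hx, hlt⟩), Or.inr heq, Or.inl (Or.inr ⟨hx, hgt⟩)]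
    calc μ S ≤ μ (S ∩ Iio c ∪ S ∩ Ioi c) + μ {c} :=
          (measure_mono hcover).trans (measure_union_le _ _)
      _ ≤ (F.card + 1 : ℕ) * B + B := by
          rw [measure_singleton, add_zero]
          exact (measure_union_le _ _).trans (add_le_add hleft hright)
      _ = ((insert c F).card + 1 : ℕ) * B := by
          rw [Finset.card_insert_of_notMem fun hcF ↦ lt_irrefl c (hc c hcF)]
          push_cast
          ring

section Polynomial

open Polynomial

theorem iteratedDeriv_eval {𝕜 : Type*} [NontriviallyNormedField 𝕜] (p : 𝕜[X]) (j : ℕ) :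
    iteratedDeriv j (fun x ↦ p.eval x) = fun x ↦ (derivative^[j] p).eval x := by
  induction j with
  | zero => simp
  | succ j ih => ext x; rw [iteratedDeriv_succ, ih, Function.iterate_succ_apply', Polynomial.deriv]

theorem eval_nonneg_of_disjoint_roots {r : ℝ[X]} {I : Set ℝ} {x y : ℝ} (hI : I.OrdConnected)
    (hroots : Disjoint I r.roots.toFinset) (hx : x ∈ I) (hrx : 0 ≤ r.eval x) (hy : y ∈ I) :
    0 ≤ r.eval y := by
  by_contra! hry
  obtain ⟨z, hzI, hz⟩ := hI.isPreconnected.intermediate_value hy hx r.continuousOn ⟨hry.le, hrx⟩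
  have hr : r ≠ 0 := by rintro rfl; simp at hry
  exact disjoint_left.1 hroots hzI (by simpa [hr] using hz)

/-- The points at which some derivative `p^(j)`, `1 ≤ j ≤ deg p`, attains one of the values `±δ`,
omitting those `j` for which `p^(j)` is the constant `δ` or `-δ` (the zero polynomial has no
`roots`). Between them, none of the `|p^(j)|` crosses the threshold `δ`. -/
def thresholdPoints (p : ℝ[X]) (δ : ℝ) : Finset ℝ :=
  (Finset.Icc 1 p.natDegree).biUnion fun j ↦
    ((derivative^[j] p) ^ 2 - C (δ ^ 2)).roots.toFinset

theorem card_thresholdPoints_le (p : ℝ[X]) (δ : ℝ) :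
    (thresholdPoints p δ).card ≤ 2 * p.natDegree ^ 2 := by
  have hcard : ∀ j, ((derivative^[j] p) ^ 2 - C (δ ^ 2)).roots.toFinset.card ≤ 2 * p.natDegree :=
    fun j ↦ calc
      _ ≤ ((derivative^[j] p) ^ 2 - C (δ ^ 2)).natDegree :=
        (Multiset.toFinset_card_le _).trans (card_roots' _)
      _ ≤ 2 * (derivative^[j] p).natDegree := by rw [natDegree_sub_C]; exact natDegree_pow_le
      _ ≤ 2 * p.natDegree :=
        Nat.mul_le_mul_left 2 ((natDegree_iterate_derivative p j).trans (Nat.sub_le _ _))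
  refine (Finset.card_biUnion_le_card_mul _ _ _ fun j _ ↦ hcard j).trans_eq ?_
  rw [Nat.card_Icc, Nat.add_sub_cancel]
  ring

theorem le_natDegree_of_eval_iterate_derivative_ne_zero {R : Type*} [Semiring R] {p : R[X]}
    {j : ℕ} {x : R} (h : (derivative^[j] p).eval x ≠ 0) : j ≤ p.natDegree := by
  by_contra! hj
  exact h (by rw [iterate_derivative_eq_zero hj, eval_zero])

theorem le_abs_eval_iterate_derivative_of_disjoint_thresholdPoints {p : ℝ[X]} {δ x y : ℝ}
    {I : Set ℝ} {j : ℕ} (hδ : 0 < δ) (hI : I.OrdConnected)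
    (hdisj : Disjoint I (thresholdPoints p δ)) (hj : 1 ≤ j) (hx : x ∈ I)
    (hpx : δ ≤ |(derivative^[j] p).eval x|) (hy : y ∈ I) :
    δ ≤ |(derivative^[j] p).eval y| := by
  have hjn : j ≤ p.natDegree :=
    le_natDegree_of_eval_iterate_derivative_ne_zero (abs_pos.1 (hδ.trans_le hpx))
  have heval : ∀ z, 0 ≤ ((derivative^[j] p) ^ 2 - C (δ ^ 2)).eval z ↔
      δ ≤ |(derivative^[j] p).eval z| := fun z ↦ by
    rw [eval_sub, eval_pow, eval_C, sub_nonneg, sq_le_sq, abs_of_pos hδ]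
  have hroots : Disjoint I ((derivative^[j] p) ^ 2 - C (δ ^ 2)).roots.toFinset :=
    hdisj.mono_right <| Finset.coe_subset.2 <|
      Finset.subset_biUnion_of_mem (fun j ↦ ((derivative^[j] p) ^ 2 - C (δ ^ 2)).roots.toFinset)
        (Finset.mem_Icc.2 ⟨hj, hjn⟩)
  exact (heval y).1 (eval_nonneg_of_disjoint_roots hI hroots hx ((heval x).2 hpx) hy)

theorem volume_setOf_abs_eval_lt_le_of_le {p : ℝ[X]} {J : Set ℝ} {d : ℕ} {δ ε : ℝ}
    (hJ : Convex ℝ J) (hε : 0 < ε) (hεδ : ε ≤ δ)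
    (hp : ∀ x ∈ J, |p.eval x| < ε → ∃ j, 1 ≤ j ∧ j ≤ d ∧ δ ≤ |(derivative^[j] p).eval x|) :
    volume {x ∈ J | |p.eval x| < ε} ≤ ENNReal.ofReal
      ((2 * p.natDegree ^ 2 + 1) * (2 ^ (d + 1) * (ε / δ) ^ (d : ℝ)⁻¹)) := by
  have hδ : 0 < δ := hε.trans_le hεδ
  set B := 2 ^ (d + 1) * (ε / δ) ^ (d : ℝ)⁻¹
  have hpiece : ∀ I : Set ℝ, I.OrdConnected → Disjoint I (thresholdPoints p δ) →
      volume ({x ∈ J | |p.eval x| < ε} ∩ I) ≤ ENNReal.ofReal B := by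
    intro I hI hdisj
    rcases ({x ∈ J | |p.eval x| < ε} ∩ I).eq_empty_or_nonempty with hempty | ⟨x, ⟨hxJ, hpx⟩, hxI⟩
    · simp [hempty]
    obtain ⟨j, hj, hjd, hjx⟩ := hp x hxJ hpx
    have hlarge : ∀ y ∈ J ∩ I, δ ≤ |iteratedDeriv j (fun y ↦ p.eval y) y| := fun y hy ↦ by
      rw [iteratedDeriv_eval]
      exact le_abs_eval_iterate_derivative_of_disjoint_thresholdPoints hδ hI hdisj hj hxI hjx hy.2
    have hsub : {x ∈ J | |p.eval x| < ε} ∩ I ⊆ {x ∈ J ∩ I | |p.eval x| < ε} :=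
      fun y hy ↦ ⟨⟨hy.1.1, hy.2⟩, hy.1.2⟩
    have hsmooth : ContDiff ℝ j fun x ↦ p.eval x := by
      simpa only [coe_aeval_eq_eval] using p.contDiff_aeval (𝕜 := ℝ) j
    exact (measure_mono hsub).trans <|
      volume_setOf_abs_lt_le_rpow hsmooth (hJ.inter hI.convex) (by omega) hjd hε hεδ hlarge
  refine (measure_le_card_add_one_mul_of_ordConnected volume _ hpiece).trans ?_
  rw [← ENNReal.ofReal_natCast, ← ENNReal.ofReal_mul (Nat.cast_nonneg _)]
  refine ENNReal.ofReal_le_ofReal (mul_le_mul_of_nonneg_right ?_ (by positivity))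
  exact_mod_cast Nat.succ_le_succ (card_thresholdPoints_le p δ)

theorem volume_setOf_abs_eval_lt_le {p : ℝ[X]} {J : Set ℝ} {d : ℕ} {δ ε : ℝ}
    (hJ : Convex ℝ J) (hJ1 : volume J ≤ 1) (hδ : 0 < δ) (hε : 0 < ε)
    (hp : ∀ x ∈ J, |p.eval x| < ε → ∃ j, 1 ≤ j ∧ j ≤ d ∧ δ ≤ |(derivative^[j] p).eval x|) :
    volume {x ∈ J | |p.eval x| < ε} ≤ ENNReal.ofReal
      ((2 * p.natDegree ^ 2 + 1) * (2 ^ (d + 1) * (ε / δ) ^ (d : ℝ)⁻¹)) := by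
  rcases le_or_gt ε δ with hεδ | hδε
  · exact volume_setOf_abs_eval_lt_le_of_le hJ hε hεδ hp
  have hratio : 1 ≤ (ε / δ) ^ (d : ℝ)⁻¹ :=
    Real.one_le_rpow ((one_le_div hδ).2 hδε.le) (by positivity)
  refine (measure_mono fun x hx ↦ hx.1).trans (hJ1.trans (ENNReal.one_le_ofReal.2 ?_))
  exact one_le_mul_of_one_le_of_one_le (le_add_of_nonneg_left (by positivity))
    (one_le_mul_of_one_le_of_one_le (one_le_pow₀ one_le_two) hratio)

theorem eval_one_iterate_derivative_T_le (n : ℤ) (k : ℕ) :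
    (derivative^[k] (Chebyshev.T ℝ n)).eval 1 ≤ (n : ℝ) ^ (2 * k) := by
  have hnonneg : ∀ k, 0 ≤ (derivative^[k] (Chebyshev.T ℝ n)).eval 1 := fun k ↦
    (abs_nonneg _).trans (Chebyshev.abs_iterate_derivative_T_real_le n k abs_one.le)
  induction k with
  | zero => simp
  | succ k ih =>
    calc (derivative^[k + 1] (Chebyshev.T ℝ n)).eval 1
        ≤ (2 * k + 1) * (derivative^[k + 1] (Chebyshev.T ℝ n)).eval 1 :=
          le_mul_of_one_le_left (hnonneg _) (le_add_of_nonneg_left (by positivity))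
      _ = (n ^ 2 - k ^ 2) * (derivative^[k] (Chebyshev.T ℝ n)).eval 1 :=
          Chebyshev.iterate_derivative_T_eval_one_recurrence n k
      _ ≤ n ^ 2 * (derivative^[k] (Chebyshev.T ℝ n)).eval 1 :=
          mul_le_mul_of_nonneg_right (sub_le_self _ (sq_nonneg _)) (hnonneg k)
      _ ≤ n ^ 2 * n ^ (2 * k) := mul_le_mul_of_nonneg_left ih (sq_nonneg _)
      _ = (n : ℝ) ^ (2 * (k + 1)) := by ring

theorem iterate_derivative_comp_linear {R : Type*} [CommSemiring R] (p : R[X]) (a b : R) (k : ℕ) :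
    derivative^[k] (p.comp (C a * X + C b)) =
      C (a ^ k) * (derivative^[k] p).comp (C a * X + C b) := by
  induction k with
  | zero => simp
  | succ k ih =>
    rw [Function.iterate_succ_apply', ih, Function.iterate_succ_apply', derivative_C_mul,
      derivative_comp]
    simp only [derivative_add, derivative_C_mul, derivative_X, derivative_C, mul_one, add_zero,
      pow_succ, C_mul]
    ring

theorem eval_one_iterate_derivative_le {P : ℝ[X]} {n : ℕ} {M : ℝ} (hdeg : P.degree ≤ n)
    (hP : ∀ x ∈ Icc (-1) 1, |P.eval x| ≤ M) (k : ℕ) :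
    (derivative^[k] P).eval 1 ≤ (n : ℝ) ^ (2 * k) * M := by
  have hM0 : 0 ≤ M := (abs_nonneg _).trans (hP 1 (by simp))
  rcases hM0.eq_or_lt with rfl | hM
  · have hzero : P = 0 := eq_zero_of_infinite_isRoot P <|
      (Icc_infinite (by norm_num : (-1 : ℝ) < 1)).mono fun x hx ↦ abs_nonpos_iff.1 (hP x hx)
    simp [hzero]
  have hdeg' : (C M⁻¹ * P).degree ≤ n := (degree_C_mul (inv_ne_zero hM.ne')).trans_le hdeg
  have hP' : ∀ x ∈ Icc (-1) 1, |(C M⁻¹ * P).eval x| ≤ 1 := fun x hx ↦ by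
    rw [eval_mul, eval_C, abs_mul, abs_of_pos (inv_pos.2 hM), inv_mul_le_one₀ hM]
    exact hP x hx
  have hT := (Chebyshev.eval_iterate_derivative_le_of_forall_abs_le_one (k := k) le_rfl
    hdeg' hP').trans (eval_one_iterate_derivative_T_le n k)
  rwa [iterate_derivative_C_mul, eval_mul, eval_C, Int.cast_natCast, inv_mul_le_iff₀' hM] at hT

theorem abs_eval_one_iterate_derivative_le {P : ℝ[X]} {n : ℕ} {M : ℝ} (hdeg : P.degree ≤ n)
    (hP : ∀ x ∈ Icc (-1) 1, |P.eval x| ≤ M) (k : ℕ) :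
    |(derivative^[k] P).eval 1| ≤ (n : ℝ) ^ (2 * k) * M := by
  refine abs_le'.2 ⟨eval_one_iterate_derivative_le hdeg hP k, ?_⟩
  rw [← eval_neg, ← iterate_derivative_neg]
  exact eval_one_iterate_derivative_le (by rwa [degree_neg]) (by simpa using hP) k

theorem pow_mul_abs_eval_iterate_derivative_le {p : ℝ[X]} {x h M : ℝ}
    (hp : ∀ y ∈ Icc (-1) 1, |p.eval (x + h * (y - 1))| ≤ M) (k : ℕ) :
    |h| ^ k * |(derivative^[k] p).eval x| ≤ (p.natDegree : ℝ) ^ (2 * k) * M := by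
  have hdeg : (p.comp (C h * X + C (x - h))).degree ≤ p.natDegree := degree_le_of_natDegree_le <|
    natDegree_comp_le.trans <| (Nat.mul_le_mul_left _ natDegree_linear_le).trans_eq (mul_one _)
  have hbound : ∀ y ∈ Icc (-1) 1, |(p.comp (C h * X + C (x - h))).eval y| ≤ M := fun y hy ↦ by
    have harg : h * y + (x - h) = x + h * (y - 1) := by ring
    simpa only [eval_comp, eval_add, eval_mul, eval_C, eval_X, harg] using hp y hy
  have hcomp := abs_eval_one_iterate_derivative_le hdeg hbound k
  rw [iterate_derivative_comp_linear, eval_mul, eval_C, eval_comp, abs_mul, abs_pow] at hcomp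
  simpa only [eval_add, eval_mul, eval_C, eval_X, mul_one, add_sub_cancel] using hcomp

/- Any `x ∈ [a, b]` is an endpoint of a subinterval of length `(b - a) / 2`, so the comparison
with Chebyshev polynomials at an endpoint also covers interior points. -/
theorem pow_mul_abs_eval_iterate_derivative_le_of_mem_Icc {p : ℝ[X]} {a b x M : ℝ}
    (hp : ∀ y ∈ Icc a b, |p.eval y| ≤ M) (hx : x ∈ Icc a b) (k : ℕ) :
    ((b - a) / 4) ^ k * |(derivative^[k] p).eval x| ≤ (p.natDegree : ℝ) ^ (2 * k) * M := by
  obtain ⟨hax, hxb⟩ := hx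
  rcases le_total ((a + b) / 2) x with hmid | hmid
  · rw [← abs_of_nonneg (by linarith : 0 ≤ (b - a) / 4)]
    exact pow_mul_abs_eval_iterate_derivative_le
      (fun y hy ↦ hp _ ⟨by nlinarith [hy.1], by nlinarith [hy.2]⟩) k
  · rw [← abs_of_nonneg (by linarith : 0 ≤ (b - a) / 4), ← abs_neg]
    exact pow_mul_abs_eval_iterate_derivative_le
      (fun y hy ↦ hp _ ⟨by nlinarith [hy.2], by nlinarith [hy.1]⟩) k

theorem pow_mul_le_of_le_abs_eval_iterate_derivative {p : ℝ[X]} {a b x δ M : ℝ} {j d : ℕ}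
    (hab : b - a ≤ 4) (hδ : 0 < δ) (hp : ∀ y ∈ Icc a b, |p.eval y| ≤ M) (hx : x ∈ Icc a b)
    (hj : 1 ≤ j) (hjd : j ≤ d) (hpx : δ ≤ |(derivative^[j] p).eval x|) :
    ((b - a) / 4) ^ d * δ ≤ (p.natDegree : ℝ) ^ (2 * d) * M := by
  have hlen : 0 ≤ (b - a) / 4 := by linarith [hx.1.trans hx.2]
  have hM : 0 ≤ M := (abs_nonneg _).trans (hp x hx)
  have hn : (1 : ℝ) ≤ p.natDegree := Nat.one_le_cast.2 <| hj.trans <|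
    le_natDegree_of_eval_iterate_derivative_ne_zero (abs_pos.1 (hδ.trans_le hpx))
  calc ((b - a) / 4) ^ d * δ ≤ ((b - a) / 4) ^ j * |(derivative^[j] p).eval x| := by
        refine mul_le_mul ?_ hpx hδ.le (by positivity)
        exact pow_le_pow_of_le_one hlen (by linarith) hjd
    _ ≤ (p.natDegree : ℝ) ^ (2 * j) * M :=
        pow_mul_abs_eval_iterate_derivative_le_of_mem_Icc hp hx j
    _ ≤ (p.natDegree : ℝ) ^ (2 * d) * M := by gcongr

end Polynomial

theorem half_le_two_div_pow_mul_div_four_pow {L : ℝ} {d : ℕ} (hd : 1 ≤ d) (hL : 0 < L)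
    (hL1 : L ≤ 1) : 1 / 2 ≤ (2 / L) ^ (2 * d - 1) * (L / 4) ^ d := by
  obtain ⟨e, rfl⟩ := Nat.exists_eq_add_of_le' hd
  have hinv : 1 ≤ L⁻¹ ^ e := one_le_pow₀ ((one_le_inv₀ hL).2 hL1)
  have hprod : (2 / L) * (L / 4) = 1 / 2 := by field_simp; norm_num
  calc (1 : ℝ) / 2 ≤ L⁻¹ ^ e * (1 / 2) := le_mul_of_one_le_left (by norm_num) hinv
    _ = (2 / L) ^ e * (1 / 2) ^ (e + 1) := by
        rw [pow_succ, ← mul_assoc, ← mul_pow, show 2 / L * (1 / 2) = L⁻¹ by ring]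
    _ = (2 / L) ^ (2 * (e + 1) - 1) * (L / 4) ^ (e + 1) := by
        rw [← hprod, mul_pow, ← mul_assoc, ← pow_add]
        congr 2
        omega

theorem two_mul_sq_add_one_mul_div_le {d : ℕ} {n δ L M : ℝ} (hd : 1 ≤ d) (hn : 1 ≤ n)
    (hδ : 0 < δ) (hL : 0 < L) (hL1 : L ≤ 1) (hM : (L / 4) ^ d * δ ≤ n ^ (2 * d) * M) :
    (2 * n ^ 2 + 1) * 2 ^ (d + 1) / δ ≤
      (2 / L) ^ (2 * d - 1) * (2 ^ (d + 3) / δ ^ 2) * (4 * n ^ (2 * (d + 1)) * M + 1) := by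
  have hn2 : 1 ≤ n ^ 2 := one_le_pow₀ hn
  calc (2 * n ^ 2 + 1) * 2 ^ (d + 1) / δ ≤ 8 * n ^ 2 * 2 ^ (d + 1) / δ := by gcongr; linarith
    _ = 1 / 2 * (2 ^ (d + 3) / δ ^ 2 * (4 * n ^ 2 * δ)) := by field_simp; ring
    _ ≤ (2 / L) ^ (2 * d - 1) * (L / 4) ^ d * (2 ^ (d + 3) / δ ^ 2 * (4 * n ^ 2 * δ)) := by
        gcongr
        exact half_le_two_div_pow_mul_div_four_pow hd hL hL1
    _ = (2 / L) ^ (2 * d - 1) * (2 ^ (d + 3) / δ ^ 2) * (4 * n ^ 2 * ((L / 4) ^ d * δ)) := by ring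
    _ ≤ (2 / L) ^ (2 * d - 1) * (2 ^ (d + 3) / δ ^ 2) * (4 * n ^ 2 * (n ^ (2 * d) * M)) := by gcongr
    _ ≤ (2 / L) ^ (2 * d - 1) * (2 ^ (d + 3) / δ ^ 2) * (4 * n ^ (2 * (d + 1)) * M + 1) := by
        gcongr
        rw [mul_add_one, pow_add]
        linarith

theorem div_rpow_inv_natCast_le {δ ε : ℝ} (hδ : 0 < δ) (hδ1 : δ ≤ 1) (hε : 0 ≤ ε) (d : ℕ) :
    (ε / δ) ^ (d : ℝ)⁻¹ ≤ ε ^ (d : ℝ)⁻¹ / δ := by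
  rw [Real.div_rpow hε hδ.le]
  gcongr
  exact Real.self_le_rpow_of_le_one hδ.le hδ1 (Nat.cast_inv_le_one d)

theorem lojasiewicz_polynomial_interval_general {d : ℕ} {δ ε a b : ℝ} (hδ : 0 < δ) (hδ1 : δ ≤ 1)
    (hab : a < b) (hba : b - a ≤ 1) {p : Polynomial ℝ}
    (hyp : ∀ x ∈ Icc a b, |p.eval x| < ε →
      ∃ j : ℕ, 1 ≤ j ∧ j ≤ d ∧ δ ≤ |iteratedDeriv j (fun y ↦ p.eval y) x|) :
    volume {x ∈ Icc a b | |p.eval x| < ε} ≤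
      ENNReal.ofReal ((2 / (b - a)) ^ (2 * d - 1) * (2 ^ (d + 3) / δ ^ 2) *
        (4 * (p.natDegree : ℝ) ^ (2 * (d + 1)) * sSup ((fun x ↦ |p.eval x|) '' Icc a b) + 1) *
          ε ^ (d : ℝ)⁻¹) := by
  rcases {x ∈ Icc a b | |p.eval x| < ε}.eq_empty_or_nonempty with hempty | ⟨x, hx, hpx⟩
  · rw [hempty, measure_empty]
    exact zero_le
  simp only [iteratedDeriv_eval] at hyp
  obtain ⟨j, hj, hjd, hjx⟩ := hyp x hx hpx
  have hε : 0 < ε := (abs_nonneg _).trans_lt hpx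
  have hn : j ≤ p.natDegree :=
    le_natDegree_of_eval_iterate_derivative_ne_zero (abs_pos.1 (hδ.trans_le hjx))
  have hmax : ∀ y ∈ Icc a b, |p.eval y| ≤ sSup ((fun x ↦ |p.eval x|) '' Icc a b) := fun y hy ↦
    le_csSup (isCompact_Icc.image p.continuous.abs).bddAbove (mem_image_of_mem _ hy)
  have hMarkov := pow_mul_le_of_le_abs_eval_iterate_derivative (by linarith) hδ hmax hx hj hjd hjx
  have hvol : volume (Icc a b) ≤ 1 := by rwa [Real.volume_Icc, ENNReal.ofReal_le_one]
  refine (volume_setOf_abs_eval_lt_le (convex_Icc a b) hvol hδ hε hyp).trans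
    (ENNReal.ofReal_le_ofReal ?_)
  calc (2 * (p.natDegree : ℝ) ^ 2 + 1) * (2 ^ (d + 1) * (ε / δ) ^ (d : ℝ)⁻¹)
      ≤ (2 * (p.natDegree : ℝ) ^ 2 + 1) * (2 ^ (d + 1) * (ε ^ (d : ℝ)⁻¹ / δ)) := by
        gcongr
        exact div_rpow_inv_natCast_le hδ hδ1 hε.le d
    _ = (2 * (p.natDegree : ℝ) ^ 2 + 1) * 2 ^ (d + 1) / δ * ε ^ (d : ℝ)⁻¹ := by ring
    _ ≤ _ := mul_le_mul_of_nonneg_right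
        (two_mul_sq_add_one_mul_div_le (hj.trans hjd) (Nat.one_le_cast.2 (hj.trans hn)) hδ
          (sub_pos.2 hab) hba hMarkov) (Real.rpow_nonneg hε.le _)

/-- Łojasiewicz-type inequality on a subinterval `I = [a,b] ⊆ [0,1]`: under the same
transversality hypothesis on `I`, `Leb {x ∈ I : |p(x)| < ε} ≤ C' ε^(1/d)` with
`C' = (2/(b-a))^(2d-1) (2^(d+3)/δ²)(4 n^(2(d+1)) max_I |p| + 1)`. -/
theorem lojasiewicz_polynomial_interval (d n : ℕ) (hd : 1 ≤ d) (δ ε : ℝ)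
    (hδ0 : 0 < δ) (hδ1 : δ < 1) (hε : 0 < ε) (a b : ℝ)
    (ha : 0 ≤ a) (hab : a < b) (hb : b ≤ 1)
    (p : Polynomial ℝ) (hdeg : p.natDegree = n) (hnd : d ≤ n)
    (hyp : ∀ x ∈ Set.Icc a b, |Polynomial.eval x p| < ε →
      ∃ j : ℕ, 1 ≤ j ∧ j ≤ d ∧
        δ ≤ |iteratedDeriv j (fun y : ℝ => Polynomial.eval y p) x|) :
    volume {x ∈ Set.Icc a b | |Polynomial.eval x p| < ε} ≤
      ENNReal.ofReal ((2 / (b - a)) ^ (2 * d - 1) * (2 ^ (d + 3) / δ ^ 2) *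
          (4 * (n : ℝ) ^ (2 * (d + 1)) *
              sSup ((fun x : ℝ => |Polynomial.eval x p|) '' Set.Icc a b) + 1) *
        ε ^ ((d : ℝ)⁻¹)) := by
  subst hdeg
  exact lojasiewicz_polynomial_interval_general hδ0 hδ1.le hab (by linarith) hyp
end
end

section
/- Let α > 0 and let I = [a,b] with 0 ≤ a < b < 1. There exist an integer k ≥ 1 and δ ∈ (0,1) such that for every 0 < ε < δ and every polynomial p ∈ ⋃_{n≥0} F_α^{(n)} one has Leb{x ∈ I : |p(x)| < ε} ≤ C · ε^{1/k}, where C := 2^{3k+5} (1+α)^{2k} deg(p)^{2(k+1)} / (δ² (1 − r_α(k))). -/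
open MeasureTheory Set Filter

noncomputable section

/-- The coefficient sequence `a` defines a power series in the class `F_α`:
`p(x) = 1 + ∑_{n ≥ 1} a_n xⁿ` with all coefficients `a_n ∈ [-α, α]`. -/
def memF (α : ℝ) (a : ℕ → ℝ) : Prop :=
  a 0 = 1 ∧ ∀ n : ℕ, 1 ≤ n → |a n| ≤ α

/-- The function on `(-1,1)` defined by the power series with coefficients `a`. -/
def Fsum (a : ℕ → ℝ) (x : ℝ) : ℝ := ∑' n : ℕ, a n * x ^ n

/-- `r_α(k) = inf {x > 0 : ∃ p ∈ F_α, p⁽ʲ⁾(x) = 0 for j = 0, …, k}`. -/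
def rAlpha (α : ℝ) (k : ℕ) : ℝ :=
  sInf {x : ℝ | 0 < x ∧ x < 1 ∧
    ∃ a : ℕ → ℝ, memF α a ∧ ∀ j : ℕ, j ≤ k → iteratedDeriv j (Fsum a) x = 0}

/-!
A holomorphic function with `1 ≤ ‖f 0‖` that is bounded on the circle `‖z‖ = R` cannot be small at
many well separated points of a smaller disc. If `L` interpolates `f` at such points, then `L` is
small on the whole disc, while by Jensen's inequality each zero of `f - L` in the smaller disc
costs a fixed factor in `‖f 0 - L 0‖`. Hence the set of small values of `f` has packing number at
most `k` at scale `ε ^ (1 / k)`, and its trace on the real line has measure `O(ε ^ (1 / k))`.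
For polynomials with bounded coefficients the implied constant does not depend on the degree, and
the factor `δ⁻²` of the claimed constant absorbs it once `δ` is small.
-/

open Metric
open scoped ComplexConjugate NNReal

lemma packingNumber_preimage_le {X Y : Type*} [EMetricSpace X] [PseudoEMetricSpace Y]
    {f : X → Y} (hf : Isometry f) (s : ℝ≥0) (A : Set Y) :
    packingNumber s (f ⁻¹' A) ≤ packingNumber s A := by
  refine iSup₂_le fun C hCA => iSup_le fun hC => ?_
  rw [← hf.injective.encard_image C]
  refine IsSeparated.encard_le_packingNumber (image_subset_iff.2 hCA) ?_
  rintro _ ⟨x, hx, rfl⟩ _ ⟨y, hy, rfl⟩ hxy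
  rw [hf.edist_eq]
  exact hC hx hy (ne_of_apply_ne f hxy)

lemma packingNumber_le_of_forall_card_ne {X : Type*} [PseudoEMetricSpace X] {s : ℝ≥0}
    {A : Set X} {k : ℕ}
    (h : ∀ T : Finset X, (T : Set X) ⊆ A → IsSeparated s (T : Set X) → T.card ≠ k + 1) :
    packingNumber s A ≤ k := by
  refine iSup₂_le fun C hCA => iSup_le fun hC => ?_
  by_contra! hk
  obtain ⟨D, hDC, hD⟩ := exists_subset_encard_eq (Order.add_one_le_of_lt hk)
  have hD_fin : D.Finite := finite_of_encard_eq_coe (k := k + 1) (by exact_mod_cast hD)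
  refine h hD_fin.toFinset (by simpa using hDC.trans hCA) (by simpa using hC.subset hDC) ?_
  rw [hD_fin.encard_eq_coe_toFinset_card] at hD
  exact_mod_cast hD

lemma volume_le_of_packingNumber_le {s : ℝ≥0} {A : Set ℝ} {k : ℕ}
    (h : packingNumber s A ≤ k) : volume A ≤ k * (2 * s) := by
  have hcov : coveringNumber s A ≤ k := (coveringNumber_le_packingNumber s A).trans h
  have hcov_top : coveringNumber s A ≠ ⊤ := ne_top_of_le_ne_top (ENat.natCast_ne_top k) hcov
  set C := (finite_minimalCover (ε := s) (A := A)).toFinset with hC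
  have hC_card : C.card ≤ k := by
    rw [← encard_minimalCover hcov_top, finite_minimalCover.encard_eq_coe_toFinset_card] at hcov
    exact_mod_cast hcov
  calc volume A ≤ volume (⋃ y ∈ C, closedBall y s) := by
        refine measure_mono ?_
        simpa [hC] using (isCover_minimalCover hcov_top).subset_iUnion_closedBall
    _ ≤ ∑ y ∈ C, volume (closedBall y (s : ℝ)) := measure_biUnion_finset_le _ _
    _ = C.card * (2 * s) := by
        simp [Real.volume_closedBall, ENNReal.ofReal_mul]
    _ ≤ k * (2 * s) := by gcongr

section Interpolation

open Polynomial

variable {ι 𝕜 : Type*} [DecidableEq ι] [NormedField 𝕜] {t : Finset ι}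
  {v : ι → 𝕜} {s D : ℝ} {z : 𝕜}

lemma norm_eval_lagrange_basis_le (hs : 0 < s) {i : ι} (hi : i ∈ t)
    (hsep : ∀ j ∈ t, j ≠ i → s ≤ ‖v i - v j‖) (hz : ∀ j ∈ t, ‖z - v j‖ ≤ D) :
    ‖(Lagrange.basis t v i).eval z‖ ≤ (D / s) ^ (t.card - 1) := by
  rw [Lagrange.basis, eval_prod, norm_prod, ← Finset.card_erase_of_mem hi, ← Finset.prod_const]
  refine Finset.prod_le_prod (fun _ _ => norm_nonneg _) fun j hj => ?_
  obtain ⟨hji, hj⟩ := Finset.mem_erase.1 hj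
  calc ‖(Lagrange.basisDivisor (v i) (v j)).eval z‖ = ‖z - v j‖ / ‖v i - v j‖ := by
        simp [Lagrange.basisDivisor, div_eq_inv_mul]
    _ ≤ D / s := div_le_div₀ ((norm_nonneg _).trans (hz j hj)) (hz j hj) hs (hsep j hj hji)

lemma norm_eval_lagrange_interpolate_le {ε : ℝ} {r : ι → 𝕜} (hs : 0 < s)
    (hsep : (t : Set ι).Pairwise fun i j => s ≤ ‖v i - v j‖) (hz : ∀ i ∈ t, ‖z - v i‖ ≤ D)
    (hr : ∀ i ∈ t, ‖r i‖ ≤ ε) :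
    ‖(Lagrange.interpolate t v r).eval z‖ ≤ t.card * (ε * (D / s) ^ (t.card - 1)) := by
  rw [Lagrange.interpolate_apply, eval_finsetSum, ← nsmul_eq_mul]
  refine (norm_sum_le _ _).trans (Finset.sum_le_card_nsmul _ _ _ fun i hi => ?_)
  rw [eval_mul, eval_C, norm_mul]
  exact mul_le_mul (hr i hi)
    (norm_eval_lagrange_basis_le hs hi (fun j hj hji => hsep hi hj hji.symm) hz)
    (norm_nonneg _) ((norm_nonneg _).trans (hr i hi))

end Interpolation

lemma norm_sq_sub_conj_mul {w z : ℂ} {R : ℝ} (hz : ‖z‖ = R) :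
    ‖(R : ℂ) ^ 2 - conj w * z‖ = R * ‖z - w‖ := by
  have h : (R : ℂ) ^ 2 - conj w * z = z * conj (z - w) := by
    rw [← hz, ← Complex.mul_conj', map_sub]
    ring
  rw [h, norm_mul, hz, Complex.norm_conj]

lemma exists_diffContOnCl_of_apply_eq_zero {R : ℝ} {w : ℂ} (hw : w ∈ ball 0 R) {f : ℂ → ℂ}
    (hf : DiffContOnCl ℂ f (ball 0 R)) (hfw : f w = 0) :
    ∃ g : ℂ → ℂ, DiffContOnCl ℂ g (ball 0 R) ∧ (∀ u, u ≠ w → f u = 0 → g u = 0) ∧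
      (∀ z ∈ sphere 0 R, ‖g z‖ = ‖f z‖) ∧ ‖f 0‖ * R = ‖w‖ * ‖g 0‖ := by
  have hR : 0 < R := pos_of_mem_ball hw
  have hw_nhds : ball 0 R ∈ nhds w := isOpen_ball.mem_nhds hw
  have hdslope (z : ℂ) : (z - w) * dslope f w z = f z := by
    simpa only [hfw, sub_zero, smul_eq_mul] using sub_smul_dslope f w z
  have hdslope_diff : DiffContOnCl ℂ (dslope f w) (ball 0 R) :=
    ⟨(Complex.differentiableOn_dslope hw_nhds).2 hf.differentiableOn,
      (continuousOn_dslope (mem_of_superset hw_nhds subset_closure)).2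
        ⟨hf.continuousOn, hf.differentiableAt isOpen_ball hw⟩⟩
  -- Division by the Blaschke factor `R (z - w) / (R² - conj w * z)`.
  refine ⟨fun z => dslope f w z * (((R : ℂ) ^ 2 - conj w * z) / R),
    hdslope_diff.smul (𝕜' := ℂ) (Differentiable.diffContOnCl (by fun_prop)), ?_, ?_, ?_⟩
  · intro u huw hfu
    have hu : dslope f w u = 0 :=
      (mul_eq_zero_iff_left (sub_ne_zero.2 huw)).1 ((hdslope u).trans hfu)
    simp only [hu, zero_mul]
  · intro z hz
    rw [← hdslope z, norm_mul, norm_div, norm_sq_sub_conj_mul (mem_sphere_zero_iff_norm.1 hz),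
      norm_mul, Complex.norm_real, Real.norm_of_nonneg hR.le]
    field_simp
  · simp only [mul_zero, sub_zero, sq, mul_self_div_self]
    rw [← hdslope 0, zero_sub, norm_mul, norm_mul, norm_neg, Complex.norm_real,
      Real.norm_of_nonneg hR.le, mul_assoc]

lemma norm_apply_zero_mul_pow_card_le_prod_norm_mul {R M : ℝ} (hR : 0 < R) {T : Finset ℂ}
    (hT : ∀ w ∈ T, w ∈ ball 0 R) {f : ℂ → ℂ} (hf : DiffContOnCl ℂ f (ball 0 R))
    (hfT : ∀ w ∈ T, f w = 0) (hfM : ∀ z ∈ sphere 0 R, ‖f z‖ ≤ M) :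
    ‖f 0‖ * R ^ T.card ≤ (∏ w ∈ T, ‖w‖) * M := by
  induction T using Finset.induction_on generalizing f with
  | empty =>
    simpa using Complex.norm_le_of_forall_mem_frontier_norm_le isBounded_ball hf
      (by rwa [frontier_ball 0 hR.ne']) (subset_closure (mem_ball_self hR))
  | insert w T hwT ih =>
    rw [Finset.forall_mem_insert] at hT hfT
    obtain ⟨g, hg, hg_zero, hg_sphere, hfg⟩ := exists_diffContOnCl_of_apply_eq_zero hT.1 hf hfT.1
    have hg_bound : ‖g 0‖ * R ^ T.card ≤ (∏ u ∈ T, ‖u‖) * M :=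
      ih hT.2 hg (fun u hu => hg_zero u (ne_of_mem_of_not_mem hu hwT) (hfT.2 u hu))
        (fun z hz => (hg_sphere z hz).trans_le (hfM z hz))
    rw [Finset.card_insert_of_notMem hwT, Finset.prod_insert hwT]
    calc ‖f 0‖ * R ^ (T.card + 1) = ‖w‖ * (‖g 0‖ * R ^ T.card) := by
          rw [pow_succ', ← mul_assoc, hfg, mul_assoc]
      _ ≤ ‖w‖ * ((∏ u ∈ T, ‖u‖) * M) := mul_le_mul_of_nonneg_left hg_bound (norm_nonneg w)
      _ = ‖w‖ * (∏ u ∈ T, ‖u‖) * M := (mul_assoc _ _ _).symm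

section SmallValues

variable {ρ R M : ℝ}

lemma norm_apply_zero_le_of_small_on_separated (hρR : ρ < R) {f : ℂ → ℂ}
    (hf : DiffContOnCl ℂ f (ball 0 R)) (hfM : ∀ z ∈ sphere 0 R, ‖f z‖ ≤ M)
    {T : Finset ℂ} (hT_ne : T.Nonempty) (hTρ : ∀ w ∈ T, ‖w‖ ≤ ρ) {s ε : ℝ} (hs : 0 < s)
    (hsep : (T : Set ℂ).Pairwise fun w u => s ≤ ‖w - u‖) (hfT : ∀ w ∈ T, ‖f w‖ ≤ ε) :
    ‖f 0‖ ≤ (ρ / R) ^ T.card * M + 2 * (T.card * (ε * (2 * R / s) ^ (T.card - 1))) := by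
  obtain ⟨w₀, hw₀⟩ := hT_ne
  have hρ : 0 ≤ ρ := (norm_nonneg w₀).trans (hTρ w₀ hw₀)
  have hR : 0 < R := hρ.trans_lt hρR
  have hε : 0 ≤ ε := (norm_nonneg _).trans (hfT w₀ hw₀)
  set L : Polynomial ℂ := Lagrange.interpolate T id f
  set Λ : ℝ := T.card * (ε * (2 * R / s) ^ (T.card - 1))
  have hL {z : ℂ} (hz : ‖z‖ ≤ R) : ‖L.eval z‖ ≤ Λ :=
    norm_eval_lagrange_interpolate_le hs hsep
      (fun w hw => (norm_sub_le z w).trans (by linarith [hTρ w hw])) hfT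
  have hJensen : ‖f 0 - L.eval 0‖ * R ^ T.card ≤ (∏ w ∈ T, ‖w‖) * (M + Λ) :=
    norm_apply_zero_mul_pow_card_le_prod_norm_mul (f := fun z => f z - L.eval z) hR
      (fun w hw => mem_ball_zero_iff.2 ((hTρ w hw).trans_lt hρR))
      (hf.sub L.differentiable.diffContOnCl)
      (fun w hw => sub_eq_zero.2
        (Lagrange.eval_interpolate_at_node f Function.injective_id.injOn hw).symm)
      (fun z hz => (norm_sub_le _ _).trans
        (add_le_add (hfM z hz) (hL (mem_sphere_zero_iff_norm.1 hz).le)))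
  have hMΛ : 0 ≤ M + Λ := by
    have hM : 0 ≤ M := (norm_nonneg _).trans (hfM R (by simp [hR.le]))
    positivity
  have hprod : ∏ w ∈ T, ‖w‖ ≤ ρ ^ T.card := by
    simpa using Finset.prod_le_prod (fun w _ => norm_nonneg w) hTρ
  have hdiff : ‖f 0 - L.eval 0‖ ≤ (ρ / R) ^ T.card * (M + Λ) := by
    rw [div_pow, div_mul_eq_mul_div, le_div_iff₀ (by positivity)]
    exact hJensen.trans (by gcongr)
  have hpow : (ρ / R) ^ T.card * Λ ≤ Λ :=
    mul_le_of_le_one_left (by positivity)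
      (pow_le_one₀ (by positivity) ((div_le_one hR).2 hρR.le))
  calc ‖f 0‖ ≤ ‖f 0 - L.eval 0‖ + ‖L.eval 0‖ := norm_le_norm_sub_add _ _
    _ ≤ (ρ / R) ^ T.card * (M + Λ) + Λ := add_le_add hdiff (hL (by simpa using hR.le))
    _ ≤ (ρ / R) ^ T.card * M + 2 * Λ := by linarith

lemma packingNumber_setOf_norm_lt_le (hρ : 0 ≤ ρ) (hρR : ρ < R) {k : ℕ} (hk : k ≠ 0)
    (hkM : (ρ / R) ^ (k + 1) * M ≤ 1 / 2) {f : ℂ → ℂ} (hf : DiffContOnCl ℂ f (ball 0 R))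
    (hfM : ∀ z ∈ sphere 0 R, ‖f z‖ ≤ M) (hf0 : 1 ≤ ‖f 0‖) {ε : ℝ} (hε : 0 < ε) :
    packingNumber (2 * R * (8 * (k + 1) * ε) ^ (k : ℝ)⁻¹).toNNReal
      {z ∈ closedBall 0 ρ | ‖f z‖ < ε} ≤ k := by
  have hR : 0 < R := hρ.trans_lt hρR
  set s : ℝ := 2 * R * (8 * (k + 1) * ε) ^ (k : ℝ)⁻¹ with hs_def
  have hs : 0 < s := by positivity
  refine packingNumber_le_of_forall_card_ne fun T hT hsep hcard => ?_
  have hsep' : (T : Set ℂ).Pairwise fun w u => s ≤ ‖w - u‖ := hsep.mono' fun w u hwu => by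
    rw [← dist_eq_norm, ← Real.coe_toNNReal s hs.le]
    rw [edist_nndist] at hwu
    exact_mod_cast hwu.le
  have hbound := norm_apply_zero_le_of_small_on_separated hρR hf hfM
    (Finset.card_pos.1 (by omega)) (fun w hw => mem_closedBall_zero_iff.1 (hT hw).1) hs hsep'
    (fun w hw => (hT hw).2.le)
  have hinterp : (k + 1 : ℕ) * (ε * (2 * R / s) ^ k) = 1 / 8 := by
    rw [hs_def, div_mul_cancel_left₀ (by positivity), inv_pow,
      Real.rpow_inv_natCast_pow (by positivity) hk]
    push_cast
    field_simp
  rw [hcard, Nat.add_sub_cancel, hinterp] at hbound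
  linarith

theorem exists_volume_norm_lt_le_rpow (hρ : 0 ≤ ρ) (hρR : ρ < R) (M : ℝ) :
    ∃ k : ℕ, 1 ≤ k ∧ ∃ K : ℝ, 0 < K ∧ ∀ f : ℂ → ℂ, DiffContOnCl ℂ f (ball 0 R) →
      (∀ z ∈ sphere 0 R, ‖f z‖ ≤ M) → 1 ≤ ‖f 0‖ → ∀ ε : ℝ, 0 < ε →
        volume {x : ℝ | |x| ≤ ρ ∧ ‖f x‖ < ε} ≤ ENNReal.ofReal (K * ε ^ (k : ℝ)⁻¹) := by
  have hR : 0 < R := hρ.trans_lt hρR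
  have htendsto : Tendsto (fun k : ℕ => (ρ / R) ^ (k + 1) * M) atTop (nhds 0) := by
    simpa using ((tendsto_pow_atTop_nhds_zero_of_lt_one (by positivity)
      ((div_lt_one hR).2 hρR)).comp (tendsto_add_atTop_nat 1)).mul_const M
  obtain ⟨k, hkM, hk⟩ :=
    ((htendsto.eventually_le_const one_half_pos).and (eventually_ge_atTop 1)).exists
  refine ⟨k, hk, 4 * k * R * (8 * (k + 1)) ^ (k : ℝ)⁻¹, by positivity, ?_⟩
  intro f hf hfM hf0 ε hε
  have hpreimage : {x : ℝ | |x| ≤ ρ ∧ ‖f x‖ < ε} =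
      Complex.ofReal ⁻¹' {z ∈ closedBall 0 ρ | ‖f z‖ < ε} := by
    ext x
    simp
  have hpacking := (packingNumber_preimage_le Complex.isometry_ofReal _ _).trans
    (packingNumber_setOf_norm_lt_le hρ hρR (by omega) hkM hf hfM hf0 hε)
  rw [hpreimage]
  refine (volume_le_of_packingNumber_le hpacking).trans_eq ?_
  rw [← ENNReal.ofReal, ← ENNReal.ofReal_ofNat 2, ← ENNReal.ofReal_natCast,
    ← ENNReal.ofReal_mul (by positivity), ← ENNReal.ofReal_mul (by positivity),
    Real.mul_rpow (by positivity) hε.le]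
  congr 1
  ring

end SmallValues

lemma norm_eval_le_of_norm_coeff_le {𝕜 : Type*} [NormedField 𝕜] {p : Polynomial 𝕜} {B : ℝ}
    (hp : ∀ i, ‖p.coeff i‖ ≤ B) {z : 𝕜} (hz : ‖z‖ < 1) :
    ‖p.eval z‖ ≤ B * (1 - ‖z‖)⁻¹ := by
  have hB : 0 ≤ B := (norm_nonneg _).trans (hp 0)
  rw [Polynomial.eval_eq_sum_range]
  calc ‖∑ i ∈ Finset.range (p.natDegree + 1), p.coeff i * z ^ i‖
      ≤ ∑ i ∈ Finset.range (p.natDegree + 1), B * ‖z‖ ^ i :=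
        norm_sum_le_of_le _ fun i _ => by
          rw [norm_mul, norm_pow]
          gcongr
          exact hp i
    _ = B * ∑ i ∈ Finset.range (p.natDegree + 1), ‖z‖ ^ i := (Finset.mul_sum _ _ _).symm
    _ ≤ B * (1 - ‖z‖)⁻¹ := by
        gcongr
        exact (summable_geometric_of_lt_one (norm_nonneg z) hz).sum_le_tsum _
          (fun i _ => by positivity) |>.trans_eq (tsum_geometric_of_lt_one (norm_nonneg z) hz)

theorem exists_volume_abs_eval_lt_le_rpow {ρ : ℝ} (hρ : 0 ≤ ρ) (hρ1 : ρ < 1) (B : ℝ) :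
    ∃ k : ℕ, 1 ≤ k ∧ ∃ K : ℝ, 0 < K ∧ ∀ p : Polynomial ℝ, 1 ≤ |p.coeff 0| →
      (∀ i, |p.coeff i| ≤ B) → ∀ ε : ℝ, 0 < ε →
        volume {x : ℝ | |x| ≤ ρ ∧ |p.eval x| < ε} ≤ ENNReal.ofReal (K * ε ^ (k : ℝ)⁻¹) := by
  obtain ⟨R, hρR, hR1⟩ := exists_between hρ1
  obtain ⟨k, hk, K, hK, hvol⟩ := exists_volume_norm_lt_le_rpow hρ hρR (B * (1 - R)⁻¹)
  refine ⟨k, hk, K, hK, fun p hp0 hpB ε hε => ?_⟩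
  set q : Polynomial ℂ := p.map Complex.ofRealHom with hq
  have hq_eval (x : ℝ) : ‖q.eval (x : ℂ)‖ = |p.eval x| := by
    rw [← Real.norm_eq_abs, ← Complex.norm_real]
    exact congrArg _ (Polynomial.eval_map_apply (f := Complex.ofRealHom) (p := p) x)
  have hqR : ∀ z ∈ sphere 0 R, ‖q.eval z‖ ≤ B * (1 - R)⁻¹ := fun z hz => by
    rw [← mem_sphere_zero_iff_norm.1 hz] at hR1 ⊢
    refine norm_eval_le_of_norm_coeff_le (fun i => ?_) hR1
    simpa [hq] using hpB i
  have hq0 : 1 ≤ ‖q.eval 0‖ := by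
    rwa [← Complex.ofReal_zero, hq_eval, ← Polynomial.coeff_zero_eq_eval_zero]
  simpa only [hq_eval] using
    hvol (fun z => q.eval z) q.differentiable.diffContOnCl hqR hq0 ε hε

lemma rAlpha_nonneg (α : ℝ) (k : ℕ) : 0 ≤ rAlpha α k :=
  Real.sInf_nonneg fun _ hx => hx.1.le

lemma rAlpha_lt_one (α : ℝ) (k : ℕ) : rAlpha α k < 1 := by
  rw [rAlpha]
  rcases Set.eq_empty_or_nonempty {x : ℝ | 0 < x ∧ x < 1 ∧
    ∃ a : ℕ → ℝ, memF α a ∧ ∀ j : ℕ, j ≤ k → iteratedDeriv j (Fsum a) x = 0} with h | ⟨x, hx⟩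
  · rw [h, Real.sInf_empty]
    exact zero_lt_one
  · exact (csInf_le ⟨0, fun _ hy => hy.1.le⟩ hx).trans_lt hx.2.1

lemma le_div_inv_sq_mul_one_sub_rAlpha {K A : ℝ} (hK : 0 < K) (hA : 1 ≤ A) (α : ℝ) (k : ℕ) :
    K ≤ A / ((K + 2)⁻¹ ^ 2 * (1 - rAlpha α k)) := by
  have hr : 0 < 1 - rAlpha α k := sub_pos.2 (rAlpha_lt_one α k)
  rw [le_div_iff₀ (by positivity)]
  calc K * ((K + 2)⁻¹ ^ 2 * (1 - rAlpha α k)) ≤ (K + 2) ^ 2 * ((K + 2)⁻¹ ^ 2 * 1) := by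
        gcongr
        · nlinarith
        · linarith [rAlpha_nonneg α k]
    _ = 1 := by field_simp
    _ ≤ A := hA

theorem polynomial_small_value_estimate_general (α a b : ℝ) (ha : -1 < a) (hb : b < 1) :
    ∃ k : ℕ, 1 ≤ k ∧ ∃ δ : ℝ, δ ∈ Set.Ioo (0 : ℝ) 1 ∧
      ∀ ε : ℝ, 0 < ε → ε < δ → ∀ p : Polynomial ℝ,
        p.coeff 0 = 1 → (∀ i : ℕ, 1 ≤ i → |p.coeff i| ≤ α) →
        volume {x ∈ Set.Icc a b | |Polynomial.eval x p| < ε} ≤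
          ENNReal.ofReal
            ((2 ^ (3 * k + 5) * (1 + α) ^ (2 * k) * (p.natDegree : ℝ) ^ (2 * (k + 1)) /
                (δ ^ 2 * (1 - rAlpha α k))) * ε ^ ((k : ℝ)⁻¹)) := by
  obtain ⟨k, hk, K, hK, hvol⟩ := exists_volume_abs_eval_lt_le_rpow (le_max_left 0 (max b (-a)))
    (max_lt one_pos (max_lt hb (by linarith))) (1 + α)
  refine ⟨k, hk, (K + 2)⁻¹, ⟨by positivity, inv_lt_one_of_one_lt₀ (by linarith)⟩, ?_⟩
  intro ε hε hεδ p hp0 hpα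
  have hα : 0 ≤ α := (abs_nonneg _).trans (hpα 1 le_rfl)
  have hp_coeff : ∀ i, |p.coeff i| ≤ 1 + α := fun i => by
    rcases Nat.eq_zero_or_pos i with rfl | hi
    · simpa [hp0] using hα
    · linarith [hpα i hi]
  rcases Nat.eq_zero_or_pos p.natDegree with hd | hd
  · -- The claimed bound is `0` here, so the set has to be empty.
    have hp : p = 1 := by rw [Polynomial.eq_C_of_natDegree_eq_zero hd, hp0, map_one]
    have hε1 : ε < 1 := hεδ.trans (inv_lt_one_of_one_lt₀ (by linarith))
    simp [hp, hε1.not_gt]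
  · have hsub : {x ∈ Set.Icc a b | |p.eval x| < ε} ⊆
        {x : ℝ | |x| ≤ max 0 (max b (-a)) ∧ |p.eval x| < ε} := fun x hx =>
      ⟨le_max_of_le_right (max_le_max hx.1.2 (neg_le_neg hx.1.1)), hx.2⟩
    refine (measure_mono hsub).trans
      ((hvol p (by simp [hp0]) hp_coeff ε hε).trans (ENNReal.ofReal_le_ofReal ?_))
    have hd1 : (1 : ℝ) ≤ p.natDegree := by exact_mod_cast hd
    have hα1 : 1 ≤ 1 + α := by linarith
    gcongr
    exact le_div_inv_sq_mul_one_sub_rAlpha hK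
      (one_le_mul_of_one_le_of_one_le (one_le_mul_of_one_le_of_one_le
        (one_le_pow₀ one_le_two) (one_le_pow₀ hα1)) (one_le_pow₀ hd1)) α k

/-- For every interval `I = [a,b]` with `0 ≤ a < b < 1` there are `k ≥ 1` and
`δ ∈ (0,1)` such that for every `0 < ε < δ` and every polynomial
`p ∈ ⋃_{n≥0} F_α⁽ⁿ⁾` (constant coefficient `1`, all other coefficients in `[-α,α]`),
`Leb {x ∈ I : |p(x)| < ε} ≤ C ε^(1/k)` where
`C = 2^(3k+5) (1+α)^(2k) deg(p)^(2(k+1)) / (δ² (1 - r_α(k)))`. -/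
theorem polynomial_small_value_estimate (α : ℝ) (hα : 0 < α) (a b : ℝ)
    (ha : 0 ≤ a) (hab : a < b) (hb : b < 1) :
    ∃ k : ℕ, 1 ≤ k ∧ ∃ δ : ℝ, δ ∈ Set.Ioo (0 : ℝ) 1 ∧
      ∀ ε : ℝ, 0 < ε → ε < δ → ∀ p : Polynomial ℝ,
        p.coeff 0 = 1 → (∀ i : ℕ, 1 ≤ i → |p.coeff i| ≤ α) →
        volume {x ∈ Set.Icc a b | |Polynomial.eval x p| < ε} ≤
          ENNReal.ofReal
            ((2 ^ (3 * k + 5) * (1 + α) ^ (2 * k) * (p.natDegree : ℝ) ^ (2 * (k + 1)) /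
                (δ ^ 2 * (1 - rAlpha α k))) * ε ^ ((k : ℝ)⁻¹)) :=
  polynomial_small_value_estimate_general α a b (by linarith) hb
end
end
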